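/- For every n ≥ 2 with n ≠ 3, if G is a finite simple graph such that for every k the number of independent sets of size k in G equals the number of independent sets of size k in the cycle C_{2n}, then G is isomorphic to C_{2n} or G is isomorphic to D_{2n}. -/

import Mathlib

open SimpleGraph Polynomial Finset

/-- The number of independent sets of size `k` in the graph `G`. -/
noncomputable def indepCount {V : Type*} [Fintype V] (G : SimpleGraph V) (k : ℕ) : ℕ :=
  Nat.card {s : Finset V // s.card = k ∧ ∀ u ∈ s, ∀ v ∈ s, ¬ G.Adj u v}

/-- The graph `D_n`: a triangle on the vertices `0, 1, 2` together with the
pendant path `2 - 3 - ⋯ - (n-1)`. -/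
def dGraph (n : ℕ) : SimpleGraph (Fin n) :=
  SimpleGraph.fromRel (fun u v =>
    (u.val = 0 ∧ v.val = 1) ∨ (u.val = 0 ∧ v.val = 2) ∨ (u.val = 1 ∧ v.val = 2) ∨
    (2 ≤ u.val ∧ v.val = u.val + 1))

/-!
The numbers of independent sets of sizes at most three fix the numbers of vertices and edges of `G`
and, by Goodman's identity, the quantity `∑ deg² - 2 · #triangles`. The independence number is `n`
and, as in `C_{2n}`, at most two independent sets attain it. Fix one of them, `S`.

A vertex outside `S` with a single neighbour `s` in `S` yields another maximum independent set, by
exchanging it with `s`; hence there is at most one such vertex, and at least `2n - 1` of the `2n`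
edges cross between `S` and its complement. If all edges cross, there are no triangles, the degree
count makes `G` two-regular, and `G` minus an edge is a path whose ends are joined by that edge.
Otherwise exactly one edge `xy` does not cross, all triangles contain it, and the degree count
bounds the crossing degrees by two. Exchanging `S` along a union of components of the crossing
graph does not lose vertices, so a disconnected crossing graph would give too many maximum
independent sets. If `x` or `y` has crossing degree one, the crossing graph is therefore a path and
`xy` closes a triangle at its end, which gives `D_{2n}`. If neither does, `x` and `y` have the same
two neighbours, and the same exchange leaves only one further vertex outside `S`, so `n = 3`.
-/

section CliqueCounting

variable {V : Type*} [Fintype V] [DecidableEq V] (G : SimpleGraph V) [DecidableRel G.Adj]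

theorem card_cliqueFinset_one : #(G.cliqueFinset 1) = Fintype.card V := by
  have h : G.cliqueFinset 1 = Finset.univ.map ⟨singleton, Finset.singleton_injective⟩ := by
    ext s
    simp [mem_cliqueFinset_iff, isNClique_one, eq_comm]
  rw [h, Finset.card_map, Finset.card_univ]

theorem card_cliqueFinset_two : #(G.cliqueFinset 2) = #G.edgeFinset := by
  rw [← Finset.card_image_of_injective G.edgeFinset (f := Sym2.toFinset) fun e e' h =>
    Sym2.ext fun v => by rw [← Sym2.mem_toFinset, h, Sym2.mem_toFinset]]
  congr 1
  ext s
  simp only [mem_cliqueFinset_iff, isNClique_iff, card_eq_two, Finset.mem_image, Sym2.exists,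
    mem_edgeFinset, mem_edgeSet, Sym2.toFinset_mk_eq]
  constructor
  · rintro ⟨hs, u, v, huv, rfl⟩
    exact ⟨u, v, hs (by simp) (by simp) huv, rfl⟩
  · rintro ⟨u, v, huv, rfl⟩
    exact ⟨by simp [isClique_iff, huv], u, v, huv.ne, rfl⟩

theorem card_cliqueFinset_top (k : ℕ) :
    #((⊤ : SimpleGraph V).cliqueFinset k) = (Fintype.card V).choose k := by
  rw [← Finset.card_univ, ← Finset.card_powersetCard]
  congr 1
  ext s
  simp [mem_cliqueFinset_iff, isNClique_iff]

theorem card_filter_insert_insert_singleton_eq {a b c : V} (hab : a ≠ b) (hac : a ≠ c)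
    (hbc : b ≠ c) : #{p : V × V × V | ({p.1, p.2.1, p.2.2} : Finset V) = {a, b, c}} = 6 := by
  have h : ({p : V × V × V | ({p.1, p.2.1, p.2.2} : Finset V) = {a, b, c}} : Finset (V × V × V)) =
      {(a, b, c), (a, c, b), (b, a, c), (b, c, a), (c, a, b), (c, b, a)} := by
    ext ⟨x, y, z⟩
    simp only [mem_filter, mem_univ, true_and, mem_insert, mem_singleton, Prod.mk.injEq,
      Finset.ext_iff]
    refine ⟨fun h => ?_, by grind⟩
    have := h a; have := h b; have := h c; have := h x; have := h y; have := h z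
    grind
  rw [h]
  repeat rw [card_insert_of_notMem (by grind)]
  simp

theorem card_filter_adj_adj_adj :
    #{p : V × V × V | G.Adj p.1 p.2.1 ∧ G.Adj p.2.1 p.2.2 ∧ G.Adj p.2.2 p.1} =
      6 * #(G.cliqueFinset 3) := by
  rw [Finset.card_eq_sum_card_fiberwise (f := fun p => ({p.1, p.2.1, p.2.2} : Finset V))
    (t := G.cliqueFinset 3), Finset.sum_const_nat (m := 6), mul_comm]
  · intro s hs
    obtain ⟨a, b, c, hab, hac, hbc, rfl⟩ := is3Clique_iff.1 (mem_cliqueFinset_iff.1 hs)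
    rw [← card_filter_insert_insert_singleton_eq hab.ne hac.ne hbc.ne, Finset.filter_filter]
    congr 1
    refine Finset.filter_congr fun p _ => and_iff_right_of_imp fun hp => ?_
    have := is3Clique_triple_iff.1 (hp ▸ mem_cliqueFinset_iff.1 hs)
    exact ⟨this.1, this.2.2, this.2.1.symm⟩
  · rintro ⟨x, y, z⟩ h
    rw [mem_coe, mem_filter] at h
    exact mem_cliqueFinset_iff.2 (is3Clique_triple_iff.2 ⟨h.2.1, h.2.2.2.symm, h.2.2.1⟩)

theorem trace_adjMatrix_pow_three (R : Type*) [Semiring R] :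
    (G.adjMatrix R ^ 3).trace = 6 * #(G.cliqueFinset 3) := by
  have h := congrArg (Nat.cast : ℕ → R) (card_filter_adj_adj_adj G)
  rw [Nat.cast_mul, Nat.cast_ofNat] at h
  rw [← h, Finset.card_filter, Fintype.sum_prod_type]
  simp only [Matrix.trace, Matrix.diag, pow_three, Matrix.mul_apply, adjMatrix_apply,
    Fintype.sum_prod_type, Nat.cast_sum, Nat.cast_ite, Nat.cast_one, Nat.cast_zero, ite_and,
    Finset.mul_sum, ite_mul, one_mul, zero_mul]

theorem trace_adjMatrix_mul_compl_mul_top (R : Type*) [CommRing R] :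
    (G.adjMatrix R * Gᶜ.adjMatrix R * (⊤ : SimpleGraph V).adjMatrix R).trace =
      ∑ v, (G.degree v : R) * Gᶜ.degree v := by
  have htrace : (G.adjMatrix R * Gᶜ.adjMatrix R).trace = 0 := by
    refine Finset.sum_eq_zero fun u _ => Finset.sum_eq_zero fun v _ => ?_
    simp only [adjMatrix_apply, compl_adj, Gᶜ.adj_comm v]
    split_ifs <;> simp_all
  have hK : (⊤ : SimpleGraph V).adjMatrix R = .of 1 - 1 :=
    adjMatrix_completeGraph_eq_of_one_sub_one ..
  have hJ : Matrix.of (1 : V → V → R) = Matrix.vecMulVec 1 1 := by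
    ext
    simp [Matrix.vecMulVec]
  rw [hK, mul_sub, mul_one, Matrix.trace_sub, htrace, sub_zero, hJ, Matrix.mul_vecMulVec,
    Matrix.trace_vecMulVec, ← Matrix.mulVec_mulVec, dotProduct_comm, Matrix.dotProduct_mulVec]
  simp [dotProduct]

theorem trace_add_pow_three {R : Type*} [CommRing R] (A B : Matrix V V R) :
    ((A + B) ^ 3).trace = (A ^ 3).trace + (B ^ 3).trace + 3 * (A * B * (A + B)).trace := by
  simp only [pow_three', add_mul, mul_add, Matrix.trace_add]
  linear_combination -Matrix.trace_mul_cycle A A B - 2 * Matrix.trace_mul_cycle A B A -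
    2 * Matrix.trace_mul_cycle A B B - Matrix.trace_mul_cycle B A B

/-- Goodman's identity: a triple of vertices spanning both an edge and a non-edge has exactly two
vertices at which an edge meets a non-edge. -/
theorem two_mul_card_triangles_add_sum_degree_mul_degree_compl :
    2 * (#(G.cliqueFinset 3) + #(Gᶜ.cliqueFinset 3)) + ∑ v, G.degree v * Gᶜ.degree v =
      2 * (Fintype.card V).choose 3 := by
  have hK : (⊤ : SimpleGraph V).adjMatrix ℤ = G.adjMatrix ℤ + Gᶜ.adjMatrix ℤ :=
    (isCompl_compl.adjMatrix_add_adjMatrix_eq_adjMatrix_completeGraph ℤ).symm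
  have h := trace_add_pow_three (G.adjMatrix ℤ) (Gᶜ.adjMatrix ℤ)
  rw [← hK, trace_adjMatrix_mul_compl_mul_top] at h
  simp only [trace_adjMatrix_pow_three, card_cliqueFinset_top] at h
  zify
  linarith

theorem cast_degree_compl (v : V) : (Gᶜ.degree v : ℤ) = Fintype.card V - 1 - G.degree v := by
  have h := G.degree_compl v
  have hlt := G.degree_lt_card_verts v
  omega

end CliqueCounting

section IndepCount

variable {V : Type*} [Fintype V] [DecidableEq V] (G : SimpleGraph V) [DecidableRel G.Adj]

theorem indepCount_eq_card_indepSetFinset (k : ℕ) :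
    indepCount G k = #(G.indepSetFinset k) := by
  rw [indepCount, ← Nat.card_eq_finsetCard]
  refine Nat.card_congr (Equiv.subtypeEquivRight fun s => ?_)
  rw [mem_indepSetFinset_iff, isNIndepSet_iff, and_comm, and_congr_left_iff]
  exact fun _ => ⟨fun hs u hu v hv _ => hs u hu v hv, fun hs u hu v hv huv =>
    hs hu hv huv.ne huv⟩

theorem indepCount_eq_card_cliqueFinset_compl (k : ℕ) :
    indepCount G k = #(Gᶜ.cliqueFinset k) := by
  rw [indepCount_eq_card_indepSetFinset]
  congr 1
  ext s
  rw [mem_indepSetFinset_iff, mem_cliqueFinset_iff, isNClique_compl]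

theorem card_edgeFinset_add_card_edgeFinset_compl :
    #G.edgeFinset + #Gᶜ.edgeFinset = (Fintype.card V).choose 2 := by
  rw [← card_edgeFinset_top_eq_card_choose_two,
    ← card_union_of_disjoint (disjoint_edgeFinset.2 disjoint_compl_right)]
  congr 1
  rw [← edgeFinset_sup]
  exact edgeFinset_inj.2 sup_compl_eq_top

end IndepCount

theorem indepNum_eq_sSup_indepCount_ne_zero {V : Type*} [Fintype V] (G : SimpleGraph V) :
    G.indepNum = sSup {k | indepCount G k ≠ 0} := by
  classical
  simp only [indepNum, indepCount_eq_card_indepSetFinset, card_ne_zero, Finset.Nonempty,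
    mem_indepSetFinset_iff]

/-- Independence equivalence: equal numbers of independent sets of every size. -/
def IndepEquiv {V W : Type*} [Fintype V] [Fintype W] (G : SimpleGraph V) (H : SimpleGraph W) :
    Prop :=
  ∀ k, indepCount G k = indepCount H k

namespace IndepEquiv

variable {V W : Type*} [Fintype V] [Fintype W] {G : SimpleGraph V} {H : SimpleGraph W}

theorem card_eq (h : IndepEquiv G H) : Fintype.card V = Fintype.card W := by
  classical
  simpa only [indepCount_eq_card_cliqueFinset_compl, card_cliqueFinset_one] using h 1

theorem indepNum_eq (h : IndepEquiv G H) : G.indepNum = H.indepNum := by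
  simp only [indepNum_eq_sSup_indepCount_ne_zero, h _]

variable [DecidableRel G.Adj] [DecidableRel H.Adj]

theorem card_edgeFinset_eq (h : IndepEquiv G H) : #G.edgeFinset = #H.edgeFinset := by
  classical
  have h₂ := h 2
  simp only [indepCount_eq_card_cliqueFinset_compl, card_cliqueFinset_two] at h₂
  have hG := card_edgeFinset_add_card_edgeFinset_compl G
  have hH := card_edgeFinset_add_card_edgeFinset_compl H
  rw [h.card_eq] at hG
  omega

theorem sum_degree_eq (h : IndepEquiv G H) : ∑ v, G.degree v = ∑ w, H.degree w := by
  simp only [sum_degrees_eq_twice_card_edges, h.card_edgeFinset_eq]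

theorem sum_degree_sq_sub_triangles_eq [DecidableEq V] [DecidableEq W] (h : IndepEquiv G H) :
    ∑ v, (G.degree v : ℤ) ^ 2 - 2 * #(G.cliqueFinset 3) =
      ∑ w, (H.degree w : ℤ) ^ 2 - 2 * #(H.cliqueFinset 3) := by
  have h₃ : #(Gᶜ.cliqueFinset 3) = #(Hᶜ.cliqueFinset 3) := by
    simpa only [indepCount_eq_card_cliqueFinset_compl] using h 3
  have hG := two_mul_card_triangles_add_sum_degree_mul_degree_compl G
  have hH := two_mul_card_triangles_add_sum_degree_mul_degree_compl H
  have hsum := h.sum_degree_eq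
  zify at hG hH hsum
  simp only [cast_degree_compl, mul_sub, mul_one, sum_sub_distrib, ← sum_mul, ← pow_two, ← hsum,
    ← h.card_eq, h₃] at hG hH
  linarith

end IndepEquiv

section PermAlongEdges

variable {V : Type*} {G : SimpleGraph V} {σ : Equiv.Perm V} {S : Finset V}

theorem disjoint_map_of_forall_adj_apply (hσ : ∀ v, G.Adj v (σ v)) (hS : G.IsIndepSet S) :
    Disjoint S (S.map σ.toEmbedding) := by
  refine Finset.disjoint_right.2 fun v hv hvS => ?_
  obtain ⟨u, hu, rfl⟩ := mem_map.1 hv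
  exact hS hu hvS (hσ u).ne (hσ u)

variable [Fintype V]

theorem two_mul_card_le_of_forall_adj_apply (hσ : ∀ v, G.Adj v (σ v)) (hS : G.IsIndepSet S) :
    2 * #S ≤ Fintype.card V := by
  have h := card_le_univ (S.disjUnion _ (disjoint_map_of_forall_adj_apply hσ hS))
  rwa [card_disjUnion, card_map, ← two_mul] at h

theorem apply_mem_iff_notMem_of_two_mul_card_eq (hσ : ∀ v, G.Adj v (σ v))
    (hS : G.IsIndepSet S) (hcard : 2 * #S = Fintype.card V) (v : V) : σ v ∈ S ↔ v ∉ S := by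
  have hd := disjoint_map_of_forall_adj_apply hσ hS
  have huniv : S.disjUnion _ hd = univ := by
    rw [← card_eq_iff_eq_univ, card_disjUnion, card_map, ← two_mul, hcard]
  have hv : σ v ∈ S.disjUnion _ hd := huniv ▸ mem_univ _
  rw [mem_disjUnion, mem_map_equiv, Equiv.symm_apply_apply] at hv
  refine ⟨fun hσv hvS => hS hvS hσv (hσ v).ne (hσ v), hv.resolve_right⟩

end PermAlongEdges

section CycleGraph

theorem cycleGraph_adj_iff_val {m : ℕ} (hm : 3 ≤ m) (i j : Fin m) :
    (cycleGraph m).Adj i j ↔ j.val = i.val + 1 ∨ i.val = j.val + 1 ∨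
      (i.val = 0 ∧ j.val = m - 1) ∨ (j.val = 0 ∧ i.val = m - 1) := by
  rw [cycleGraph_adj', Fin.val_sub, Fin.val_sub]
  obtain ⟨i, hi⟩ := i
  obtain ⟨j, hj⟩ := j
  simp only
  rcases lt_trichotomy i j with h | rfl | h
  · rw [show m - i + j = j - i + m by omega, Nat.add_mod_right,
      Nat.mod_eq_of_lt (show m - j + i < m by omega), Nat.mod_eq_of_lt (show j - i < m by omega)]
    omega
  · rw [show m - i + i = m by omega, Nat.mod_self]
    omega
  · rw [show m - j + i = i - j + m by omega, Nat.add_mod_right,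
      Nat.mod_eq_of_lt (show m - i + j < m by omega), Nat.mod_eq_of_lt (show i - j < m by omega)]
    omega

theorem degree_cycleGraph {m : ℕ} (hm : 3 ≤ m) (i : Fin m) : (cycleGraph m).degree i = 2 := by
  obtain ⟨k, rfl⟩ := Nat.exists_eq_add_of_le' hm
  exact cycleGraph_degree_three_le

theorem cliqueFree_three_cycleGraph {m : ℕ} (hm : 4 ≤ m) : (cycleGraph m).CliqueFree 3 := by
  intro s hs
  obtain ⟨a, b, c, hab, hac, hbc, -⟩ := is3Clique_iff.1 hs
  rw [cycleGraph_adj_iff_val (by omega)] at hab hac hbc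
  omega

theorem cycleGraph_adj_finRotate {m : ℕ} (hm : 3 ≤ m) (i : Fin m) :
    (cycleGraph m).Adj i (finRotate m i) := by
  obtain ⟨k, rfl⟩ := Nat.exists_eq_add_of_le' hm
  rw [cycleGraph_adj_iff_val hm, coe_finRotate]
  split_ifs with h
  · simp [h]
  · simp

theorem exists_isNIndepSet_cycleGraph_two_mul {n : ℕ} (hn : 2 ≤ n) :
    ∃ S, (cycleGraph (2 * n)).IsNIndepSet n S := by
  let f : Fin n ↪ Fin (2 * n) := ⟨fun i => ⟨2 * i.val, by omega⟩, fun i j hij => by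
    simpa [Fin.ext_iff] using hij⟩
  refine ⟨univ.map f, ?_, by simp⟩
  intro u hu v hv _
  obtain ⟨i, -, rfl⟩ := mem_map.1 hu
  obtain ⟨j, -, rfl⟩ := mem_map.1 hv
  rw [cycleGraph_adj_iff_val (by omega), show (f i).val = 2 * i by rfl,
    show (f j).val = 2 * j by rfl]
  omega

theorem indepNum_cycleGraph_two_mul {n : ℕ} (hn : 2 ≤ n) : (cycleGraph (2 * n)).indepNum = n := by
  refine le_antisymm ?_ ?_
  · obtain ⟨S, hS⟩ := (cycleGraph (2 * n)).exists_isNIndepSet_indepNum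
    have h := two_mul_card_le_of_forall_adj_apply (cycleGraph_adj_finRotate (by omega)) hS.1
    rw [hS.card_eq, Fintype.card_fin] at h
    omega
  · obtain ⟨S, hS⟩ := exists_isNIndepSet_cycleGraph_two_mul hn
    exact hS.card_eq.ge.trans hS.1.card_le_indepNum

theorem card_indepSetFinset_cycleGraph_two_mul_le {n : ℕ} (hn : 2 ≤ n) :
    #((cycleGraph (2 * n)).indepSetFinset n) ≤ 2 := by
  have : NeZero (2 * n) := ⟨by omega⟩
  refine Finset.card_le_card_of_injOn (t := (univ : Finset Bool)) (fun S => decide (0 ∈ S))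
    (fun _ _ => mem_univ _) ?_
  intro S hS T hT h
  rw [mem_coe, mem_indepSetFinset_iff] at hS hT
  have hrot := cycleGraph_adj_finRotate (m := 2 * n) (by omega)
  ext i
  induction hi : i.val generalizing i with
  | zero =>
    obtain rfl : i = 0 := Fin.ext (by simpa using hi)
    simpa using h
  | succ k ih =>
    have hik : finRotate (2 * n) ⟨k, by omega⟩ = i := by
      refine Fin.ext ?_
      simp only [finRotate_apply, Fin.val_add, Fin.val_one', Nat.add_mod_mod]
      rw [Nat.mod_eq_of_lt (by omega), hi]
    rw [← hik, apply_mem_iff_notMem_of_two_mul_card_eq hrot hS.1 (by simp [hS.2]),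
      apply_mem_iff_notMem_of_two_mul_card_eq hrot hT.1 (by simp [hT.2]), ih _ rfl]

end CycleGraph

section Path

variable {V : Type*} {G : SimpleGraph V} {x : V}

theorem exists_adj_dist_eq_of_dist_eq_add_one (hG : G.Connected) {k : ℕ} {v : V}
    (hv : G.dist x v = k + 1) : ∃ u, G.Adj u v ∧ G.dist x u = k := by
  obtain ⟨p, hp⟩ := hG.exists_walk_length_eq_dist v x
  rw [G.dist_comm, hv] at hp
  cases p with
  | nil => simp at hp
  | @cons _ u _ hvu q =>
    refine ⟨u, hvu.symm, ?_⟩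
    have hux : G.dist x u ≤ q.length := G.dist_comm ▸ dist_le q
    have htri := hG.dist_triangle (u := x) (v := u) (w := v)
    rw [dist_eq_one_iff_adj.2 hvu.symm] at htri
    rw [Walk.length_cons] at hp
    omega

variable [Fintype V] [DecidableRel G.Adj]

theorem injective_dist (hG : G.Connected) (hdeg : ∀ v, G.degree v ≤ 2) (hx : G.degree x ≤ 1) :
    Function.Injective (G.dist x) := by
  suffices h : ∀ k u v, G.dist x u = k → G.dist x v = k → u = v from
    fun u v huv => h _ u v rfl huv.symm
  intro k
  induction k with
  | zero =>
    intro u v hu hv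
    rw [hG.dist_eq_zero_iff] at hu hv
    exact hu.symm.trans hv
  | succ k ih =>
    intro u v hu hv
    obtain ⟨w, hwu, hw⟩ := exists_adj_dist_eq_of_dist_eq_add_one hG hu
    obtain ⟨w', hwv, hw'⟩ := exists_adj_dist_eq_of_dist_eq_add_one hG hv
    obtain rfl := ih w w' hw hw'
    cases k with
    | zero =>
      obtain rfl := hG.dist_eq_zero_iff.1 hw
      exact card_le_one.1 hx u (by simpa using hwu) v (by simpa using hwv)
    | succ j =>
      obtain ⟨z, hzw, hz⟩ := exists_adj_dist_eq_of_dist_eq_add_one hG hw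
      by_contra huv
      refine (hdeg w).not_gt (two_lt_card.2 ⟨z, ?_, u, ?_, v, ?_, ?_, ?_, huv⟩)
      · simpa using hzw.symm
      · simpa using hwu
      · simpa using hwv
      · rintro rfl
        omega
      · rintro rfl
        omega

theorem adj_iff_dist_eq_add_one (hG : G.Connected) (hdeg : ∀ v, G.degree v ≤ 2)
    (hx : G.degree x ≤ 1) {u v : V} :
    G.Adj u v ↔ G.dist x u + 1 = G.dist x v ∨ G.dist x v + 1 = G.dist x u := by
  have hinj := injective_dist hG hdeg hx
  have key : ∀ {u v}, G.dist x u + 1 = G.dist x v → G.Adj u v := fun h => by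
    obtain ⟨w, hw, hxw⟩ := exists_adj_dist_eq_of_dist_eq_add_one hG h.symm
    exact hinj hxw ▸ hw
  refine ⟨fun h => ?_, fun h => h.elim key fun h => (key h).symm⟩
  have := hinj.ne h.ne
  have := h.diff_dist_adj (u := x)
  omega

theorem exists_iso_pathGraph (hG : G.Connected) (hdeg : ∀ v, G.degree v ≤ 2)
    (hx : G.degree x ≤ 1) :
    ∃ f : G ≃g pathGraph (Fintype.card V), ∀ v, (f v).val = G.dist x v := by
  have hlt (v : V) : G.dist x v < Fintype.card V := by
    obtain ⟨p, hp, hlen⟩ := hG.exists_path_of_dist x v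
    exact hlen ▸ hp.length_lt
  let f : V → Fin (Fintype.card V) := fun v => ⟨G.dist x v, hlt v⟩
  have hf : Function.Bijective f := by
    rw [Fintype.bijective_iff_injective_and_card, Fintype.card_fin]
    exact ⟨fun u v huv => injective_dist hG hdeg hx (Fin.val_eq_of_eq huv), rfl⟩
  refine ⟨⟨Equiv.ofBijective f hf, fun {u v} => ?_⟩, fun v => rfl⟩
  rw [pathGraph_adj, adj_iff_dist_eq_add_one hG hdeg hx]
  rfl

theorem val_eq_zero_or_of_degree_pathGraph_le_one {m : ℕ} {i : Fin m}
    [Fintype ((pathGraph m).neighborSet i)] (hi : (pathGraph m).degree i ≤ 1) :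
    i.val = 0 ∨ i.val = m - 1 := by
  by_contra! h
  have := card_le_one.1 hi ⟨i.val - 1, by omega⟩ ?_ ⟨i.val + 1, by omega⟩ ?_
  · rw [Fin.mk.injEq] at this
    omega
  all_goals
    rw [mem_neighborFinset, pathGraph_adj]
    grind

end Path

section AddEdge

theorem nonempty_iso_sup_edge {V W : Type*} {G H : SimpleGraph V} {P : SimpleGraph W} {x y : V}
    (hG : G = H ⊔ edge x y) (f : H ≃g P) : Nonempty (G ≃g (P ⊔ edge (f x) (f y))) := by
  refine ⟨⟨f.toEquiv, fun {u v} => ?_⟩⟩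
  simp [hG, sup_adj, edge_adj, f.map_adj_iff]

theorem pathGraph_sup_edge_eq_cycleGraph {m : ℕ} (hm : 3 ≤ m) {i j : Fin m} (hi : i.val = 0)
    (hj : j.val = m - 1) : pathGraph m ⊔ edge i j = cycleGraph m := by
  ext u v
  rw [sup_adj, edge_adj, pathGraph_adj, cycleGraph_adj_iff_val hm]
  simp only [Fin.ext_iff, ne_eq]
  omega

theorem pathGraph_sup_edge_eq_dGraph {m : ℕ} {i j : Fin m} (hi : i.val = 0)
    (hj : j.val = 2) : pathGraph m ⊔ edge i j = dGraph m := by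
  ext u v
  rw [sup_adj, edge_adj, pathGraph_adj, dGraph, fromRel_adj]
  simp only [Fin.ext_iff, ne_eq]
  omega

end AddEdge

theorem isIndepSet_of_isBipartiteWith {V : Type*} {G : SimpleGraph V} {s t : Set V}
    (hG : G.IsBipartiteWith s t) : G.IsIndepSet s := fun _ hu _ hv _ huv =>
  Set.disjoint_left.1 hG.disjoint hv (hG.mem_of_mem_adj hu huv)

section Exchange

variable {V : Type*} [Fintype V] [DecidableEq V] {H : SimpleGraph V} {S K : Finset V}

theorem isIndepSet_symmDiff (hH : H.IsBipartiteWith S ↑Sᶜ)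
    (hK : ∀ ⦃u v⦄, H.Adj u v → u ∈ K → v ∈ K) : H.IsIndepSet ↑(symmDiff S K) := by
  intro u hu v hv _ huv
  have hS := hH.mem_of_adj huv
  have hK' : u ∈ K ↔ v ∈ K := ⟨hK huv, hK huv.symm⟩
  simp only [mem_coe, mem_symmDiff, mem_compl] at hu hv hS
  tauto

variable [DecidableRel H.Adj]

theorem sum_degree_inter_eq_sum_degree_sdiff (hH : H.IsBipartiteWith S ↑Sᶜ)
    (hK : ∀ ⦃u v⦄, H.Adj u v → u ∈ K → v ∈ K) :
    ∑ v ∈ S ∩ K, H.degree v = ∑ v ∈ K \ S, H.degree v := by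
  rw [sum_congr rfl, sum_card_bipartiteAbove_eq_sum_card_bipartiteBelow H.Adj (t := K \ S)]
  · refine sum_congr rfl fun v hv => congrArg card ?_
    rw [mem_sdiff] at hv
    ext u
    rw [mem_bipartiteBelow, mem_neighborFinset, mem_inter, H.adj_comm u v, and_iff_right_iff_imp]
    have := hH.symm.mem_of_mem_adj (v := v) (w := u) (by simpa using hv.2)
    exact fun h => ⟨this h, hK h hv.1⟩
  · refine fun v hv => congrArg card ?_
    rw [mem_inter] at hv
    ext u
    rw [mem_bipartiteAbove, mem_neighborFinset, mem_sdiff, iff_and_self, ← mem_compl]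
    exact fun h => ⟨hK h hv.2, hH.mem_of_mem_adj hv.1 h⟩

theorem card_le_card_symmDiff (hH : H.IsBipartiteWith S ↑Sᶜ) (hdeg : ∀ v, H.degree v ≤ 2)
    (hcard : 2 * #S ≤ #H.edgeFinset + 1) (hK : ∀ ⦃u v⦄, H.Adj u v → u ∈ K → v ∈ K) :
    #S ≤ #(symmDiff S K) := by
  have hsum : ∑ v ∈ S \ K, H.degree v + ∑ v ∈ S ∩ K, H.degree v = #H.edgeFinset := by
    rw [add_comm, sum_inter_add_sum_sdiff, isBipartiteWith_sum_degrees_eq_card_edges hH]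
  have hout : ∑ v ∈ S \ K, H.degree v ≤ #(S \ K) * 2 := sum_le_card_nsmul _ _ _ fun v _ => hdeg v
  have hin : ∑ v ∈ S ∩ K, H.degree v ≤ #(K \ S) * 2 := by
    rw [sum_degree_inter_eq_sum_degree_sdiff hH hK]
    exact sum_le_card_nsmul _ _ _ fun v _ => hdeg v
  have hS := card_sdiff_add_card_inter S K
  have hsymm : #(symmDiff S K) = #(S \ K) + #(K \ S) :=
    card_union_of_disjoint disjoint_sdiff_sdiff
  omega

theorem connected_of_unique_isIndepSet (hH : H.IsBipartiteWith S ↑Sᶜ)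
    (hdeg : ∀ v, H.degree v ≤ 2) (hcard : 2 * #S ≤ #H.edgeFinset + 1) {x : V} (hx : x ∉ S)
    (huniq : ∀ U : Finset V, H.IsIndepSet U → #S ≤ #U → x ∉ U → U = S) : H.Connected := by
  classical
  let K : Finset V := {v | ¬ H.Reachable x v}
  have hK : ∀ ⦃u v⦄, H.Adj u v → u ∈ K → v ∈ K := fun u v huv hu => by
    simp only [K, mem_filter_univ] at hu ⊢
    exact fun hv => hu (hv.trans huv.symm.reachable)
  have hxK : x ∉ symmDiff S K := by simp [K, mem_symmDiff, hx]
  have h := huniq _ (isIndepSet_symmDiff hH hK) (card_le_card_symmDiff hH hdeg hcard hK) hxK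
  have hempty : K = ∅ := symmDiff_eq_left.1 h
  refine (connected_iff_exists_forall_reachable H).2 ⟨x, fun v => ?_⟩
  have hv : v ∉ K := hempty ▸ notMem_empty v
  simpa [K] using hv

end Exchange

theorem mem_insert_insert_neighborFinset_of_adj {V : Type*} [Fintype V] [DecidableEq V]
    {H : SimpleGraph V} [DecidableRel H.Adj] {x y u v : V} (hdeg : ∀ v, H.degree v ≤ 2)
    (hne : x ≠ y) (hxy : H.neighborFinset x = H.neighborFinset y) (huv : H.Adj u v)
    (hu : u ∈ insert x (insert y (H.neighborFinset x))) :
    v ∈ insert x (insert y (H.neighborFinset x)) := by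
  rw [← mem_neighborFinset] at huv
  simp only [mem_insert] at hu ⊢
  rcases hu with rfl | rfl | hux
  · exact .inr (.inr huv)
  · exact .inr (.inr (hxy ▸ huv))
  · have hsub : {x, y} ⊆ H.neighborFinset u := by
      have huy := hxy ▸ hux
      rw [mem_neighborFinset] at hux huy
      simp [insert_subset_iff, hux.symm, huy.symm]
    have heq := eq_of_subset_of_card_le hsub ((hdeg u).trans_eq (card_pair hne).symm)
    rw [← heq, mem_insert, mem_singleton] at huv
    exact huv.imp_right .inl

section SupEdge

variable {V : Type*} {G H : SimpleGraph V} {x y : V}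

theorem isIndepSet_of_eq_sup_edge (hG : G = H ⊔ edge x y) {U : Set V} (hU : H.IsIndepSet U)
    (hx : x ∉ U) : G.IsIndepSet U := by
  intro u hu v hv huv hadj
  rw [hG, sup_adj, edge_adj] at hadj
  rcases hadj with hadj | ⟨⟨rfl, -⟩ | ⟨-, rfl⟩, -⟩
  exacts [hU hu hv huv hadj, hx hu, hx hv]

variable [Fintype V] [DecidableRel G.Adj] [DecidableRel H.Adj]

theorem degree_left_of_eq_sup_edge (hG : G = H ⊔ edge x y) (hne : x ≠ y) (hxy : ¬ H.Adj x y) :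
    G.degree x = H.degree x + 1 := by
  have h : G.neighborFinset x = (H.neighborFinset x).cons y (by simpa using hxy) := by
    ext v
    simp only [mem_neighborFinset, hG, sup_adj, edge_adj, mem_cons]
    grind
  rw [← card_neighborFinset_eq_degree, h, card_cons, card_neighborFinset_eq_degree]

theorem degree_right_of_eq_sup_edge (hG : G = H ⊔ edge x y) (hne : x ≠ y) (hxy : ¬ H.Adj x y) :
    G.degree y = H.degree y + 1 :=
  degree_left_of_eq_sup_edge (hG.trans (by rw [edge_comm])) hne.symm (mt Adj.symm hxy)

theorem degree_of_eq_sup_edge (hG : G = H ⊔ edge x y) {v : V} (hx : v ≠ x) (hy : v ≠ y) :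
    G.degree v = H.degree v := by
  rw [← card_neighborFinset_eq_degree, ← card_neighborFinset_eq_degree]
  congr 1
  ext u
  simp only [mem_neighborFinset, hG, sup_adj, edge_adj]
  tauto

theorem card_edgeFinset_of_eq_sup_edge (hG : G = H ⊔ edge x y) (hne : x ≠ y)
    (hxy : ¬ H.Adj x y) : #G.edgeFinset = #H.edgeFinset + 1 := by
  subst hG
  exact card_edgeFinset_sup_edge H hxy hne

theorem card_cliqueFinset_three_le_of_eq_sup_edge [DecidableEq V] (hG : G = H ⊔ edge x y)
    (hne : x ≠ y) (hH : H.CliqueFree 3) :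
    #(G.cliqueFinset 3) ≤ #(H.neighborFinset x ∩ H.neighborFinset y) := by
  refine card_le_card_of_surjOn (fun z => {x, y, z}) fun s hs => ?_
  rw [mem_coe, mem_cliqueFinset_iff, hG] at hs
  have hx : x ∈ s := hH.mem_of_sup_edge_isNClique hs
  have hy : y ∈ s.erase x :=
    mem_erase.2 ⟨hne.symm, hH.mem_of_sup_edge_isNClique (edge_comm x y ▸ hs)⟩
  obtain ⟨z, hz⟩ : ∃ z, (s.erase x).erase y = {z} := by
    rw [← card_eq_one, card_erase_of_mem hy, card_erase_of_mem hx, hs.card_eq]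
  obtain ⟨hzy, hzx, -⟩ : z ≠ y ∧ z ≠ x ∧ z ∈ s := by
    simpa only [mem_erase] using (hz ▸ mem_singleton_self z : z ∈ (s.erase x).erase y)
  obtain rfl : {x, y, z} = s := by rw [← hz, insert_erase hy, insert_erase hx]
  obtain ⟨-, hxz, hyz⟩ := is3Clique_triple_iff.1 hs
  refine ⟨z, ?_, rfl⟩
  simp only [mem_coe, mem_inter, mem_neighborFinset]
  simp only [sup_adj, edge_adj] at hxz hyz
  tauto

end SupEdge

section Crossing

variable {V : Type*} [Fintype V] [DecidableEq V] {G : SimpleGraph V} {S : Finset V}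

/-- The graph formed by the edges of `G` between `S` and its complement. -/
def crossing (G : SimpleGraph V) (S : Finset V) : SimpleGraph V := G.between S ↑Sᶜ

theorem crossing_adj {u v : V} : (crossing G S).Adj u v ↔ G.Adj u v ∧ (u ∈ S ↔ v ∉ S) := by
  simp only [crossing, between_adj, mem_coe, mem_compl]
  tauto

instance [DecidableRel G.Adj] : DecidableRel (crossing G S).Adj := fun _ _ =>
  decidable_of_iff _ crossing_adj.symm

theorem crossing_le : crossing G S ≤ G := between_le

theorem isBipartiteWith_crossing : (crossing G S).IsBipartiteWith S ↑Sᶜ :=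
  between_isBipartiteWith (disjoint_coe.2 disjoint_compl_right)

theorem notMem_of_not_crossing_adj (hS : G.IsIndepSet S) {x y : V} (hG : G.Adj x y)
    (hxy : ¬ (crossing G S).Adj x y) : x ∉ S := fun hx =>
  hxy (crossing_adj.2 ⟨hG, iff_of_true hx fun hy => hS hx hy hG.ne hG⟩)

variable [DecidableRel G.Adj]

theorem crossing_eq_or_exists_eq_sup_edge (h : #G.edgeFinset ≤ #(crossing G S).edgeFinset + 1) :
    crossing G S = G ∨
      ∃ x y, G.Adj x y ∧ ¬ (crossing G S).Adj x y ∧ G = crossing G S ⊔ edge x y := by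
  rw [or_iff_not_imp_left]
  intro hne
  obtain ⟨x, y, hG, hxy⟩ : ∃ x y, G.Adj x y ∧ ¬ (crossing G S).Adj x y := by
    by_contra! hall
    exact hne (le_antisymm crossing_le hall)
  refine ⟨x, y, hG, hxy, (edgeFinset_inj.1 (eq_of_subset_of_card_le ?_ ?_)).symm⟩
  · exact edgeFinset_mono (sup_le crossing_le ((edge_le_iff G).2 (.inr hG)))
  · rwa [card_edgeFinset_sup_edge _ hxy hG.ne]

end Crossing

section MaximumIndepSet

variable {V : Type*} [Fintype V] [DecidableEq V] {G : SimpleGraph V} {S : Finset V}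
  [DecidableRel G.Adj]

theorem one_le_degree_crossing (hS : G.IsMaximumIndepSet S) {r : V} (hr : r ∉ S) :
    1 ≤ (crossing G S).degree r := by
  by_contra! hdeg
  rw [Nat.lt_one_iff, ← card_neighborFinset_eq_degree, card_eq_zero] at hdeg
  have hins : G.IsIndepSet ↑(insert r S) := by
    rw [coe_insert, ← isClique_compl, isClique_insert, isClique_compl]
    refine ⟨hS.1, fun s hs hrs => (compl_adj ..).2 ⟨hrs, fun h => ?_⟩⟩
    exact notMem_empty s (hdeg ▸ (mem_neighborFinset ..).2
      (crossing_adj.2 ⟨h, iff_of_false hr (not_not.2 hs)⟩))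
  have := hS.2 _ hins
  rw [card_insert_of_notMem hr] at this
  omega

theorem exists_isNIndepSet_insert_erase (hS : G.IsIndepSet S) {r : V} (hr : r ∉ S)
    (hdeg : (crossing G S).degree r = 1) :
    ∃ s, G.IsNIndepSet #S (insert r (S.erase s)) := by
  obtain ⟨s, hs⟩ := card_eq_one.1 hdeg
  have hcross {w : V} : (crossing G S).Adj r w ↔ w = s := by
    rw [← mem_neighborFinset, hs, mem_singleton]
  have hsS : s ∈ S := by
    have := (crossing_adj.1 (hcross.2 rfl)).2
    tauto
  refine ⟨s, (isNClique_compl G).1 (((isNClique_compl G).2 ⟨hS, rfl⟩).insert_erase ?_ hsS)⟩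
  intro w hw
  rw [mem_sdiff, mem_singleton] at hw
  refine (compl_adj ..).2 ⟨fun h => hr (h ▸ hw.1), fun hG => hw.2 (hcross.1 ?_)⟩
  exact crossing_adj.2 ⟨hG, iff_of_false hr (not_not.2 hw.1)⟩

end MaximumIndepSet

theorem two_mul_choose_two_le (d : ℕ) : 2 * ((d - 1).choose 2 : ℤ) ≤ d ^ 2 - 3 * d + 2 := by
  rcases d with _ | d
  · norm_num
  · rw [Nat.add_sub_cancel]
    qify
    rw [Nat.cast_choose_two]
    linarith

theorem le_choose_two {k : ℕ} (hk : 3 ≤ k) : k ≤ k.choose 2 := by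
  rw [Nat.choose_two_right, Nat.le_div_iff_mul_le two_pos]
  exact Nat.mul_le_mul_left k (by omega)

theorem le_two_of_choose_two_add_choose_two_le {a b c : ℕ} (hb : 1 ≤ b) (hca : c ≤ a) (hcb : c ≤ b)
    (h : a.choose 2 + b.choose 2 ≤ c) : a ≤ 2 := by
  by_contra! ha
  have := le_choose_two ha
  have hb0 : b.choose 2 = 0 := by omega
  rw [Nat.choose_eq_zero_iff] at hb0
  omega

theorem choose_two_add_choose_two_eq {a b c : ℕ} (ha : 1 ≤ a) (hb : 1 ≤ b) (hab : a ≠ 1 ∨ b ≠ 1)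
    (hca : c ≤ a) (hcb : c ≤ b) (h : a.choose 2 + b.choose 2 ≤ c) :
    a ≤ 2 ∧ b ≤ 2 ∧ c = min a b ∧ c = a.choose 2 + b.choose 2 := by
  have ha2 := le_two_of_choose_two_add_choose_two_le hb hca hcb h
  have hb2 := le_two_of_choose_two_add_choose_two_le ha hcb hca (by omega)
  have hchoose : Nat.choose 1 2 = 0 ∧ Nat.choose 2 2 = 1 := by decide
  obtain rfl | rfl : a = 1 ∨ a = 2 := by omega
  all_goals
    obtain rfl | rfl : b = 1 ∨ b = 2 := by omega
    all_goals omega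

/-- `G` shares with an even cycle the properties that determine it up to the exceptions of the
theorem: `S` is a maximum independent set containing half of the vertices, at most two independent
sets are as large, and there are as many edges as vertices. The last field bounds the degrees in
terms of the triangles; its truncated `(d - 1).choose 2` vanishes for `d ≤ 2`. -/
structure EvenCycleProfile {V : Type*} [Fintype V] [DecidableEq V] (G : SimpleGraph V)
    [DecidableRel G.Adj] (S : Finset V) : Prop where
  isMaximumIndepSet : G.IsMaximumIndepSet S
  card_indepSetFinset_le : #(G.indepSetFinset #S) ≤ 2
  card_compl : #Sᶜ = #S
  card_edgeFinset : #G.edgeFinset = 2 * #S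
  sum_choose_two_le : ∑ v, (G.degree v - 1).choose 2 ≤ #(G.cliqueFinset 3)

theorem IndepEquiv.evenCycleProfile {V : Type*} [Fintype V] [DecidableEq V] {G : SimpleGraph V}
    [DecidableRel G.Adj] {n : ℕ} (hn : 2 ≤ n) (h : IndepEquiv G (cycleGraph (2 * n)))
    {S : Finset V} (hS : G.IsMaximumIndepSet S) : EvenCycleProfile G S := by
  obtain rfl : #S = n := by
    rw [maximumIndepSet_card_eq_indepNum S hS, h.indepNum_eq, indepNum_cycleGraph_two_mul hn]
  have hdeg (i : Fin (2 * #S)) : (cycleGraph (2 * #S)).degree i = 2 :=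
    degree_cycleGraph (by omega) i
  have hcard : Fintype.card V = 2 * #S := by rw [h.card_eq, Fintype.card_fin]
  have hsum : ∑ v, G.degree v = 2 * #S * 2 := by simp [h.sum_degree_eq, hdeg]
  have hsq := h.sum_degree_sq_sub_triangles_eq
  rw [(cliqueFree_three_cycleGraph (by omega)).cliqueFinset] at hsq
  refine ⟨hS, ?_, ?_, ?_, ?_⟩
  · rw [← indepCount_eq_card_indepSetFinset, h, indepCount_eq_card_indepSetFinset]
    exact card_indepSetFinset_cycleGraph_two_mul_le hn
  · rw [card_compl, hcard]
    omega
  · rw [sum_degrees_eq_twice_card_edges] at hsum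
    omega
  · zify at hsum hcard
    simp only [hdeg, sum_const, card_univ, Fintype.card_fin, card_empty, nsmul_eq_mul] at hsq
    push_cast at hsq
    have hle := sum_le_sum fun v (_ : v ∈ univ) => two_mul_choose_two_le (G.degree v)
    simp only [sum_add_distrib, sum_sub_distrib, ← mul_sum, sum_const, card_univ,
      nsmul_eq_mul] at hle
    linarith

namespace EvenCycleProfile

variable {V : Type*} [Fintype V] [DecidableEq V] {G H : SimpleGraph V} [DecidableRel G.Adj]
  [DecidableRel H.Adj] {S T U : Finset V} {x y r r' : V}

theorem eq_of_ne (h : EvenCycleProfile G S) (hT : G.IsNIndepSet #S T) (hTS : T ≠ S)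
    (hU : G.IsNIndepSet #S U) (hUS : U ≠ S) : U = T := by
  by_contra hne
  refine h.card_indepSetFinset_le.not_gt (two_lt_card.2 ⟨S, ?_, T, ?_, U, ?_, ?_⟩)
  · exact (mem_indepSetFinset_iff ..).2 ⟨h.isMaximumIndepSet.1, rfl⟩
  · exact (mem_indepSetFinset_iff ..).2 hT
  · exact (mem_indepSetFinset_iff ..).2 hU
  · exact ⟨hTS.symm, hUS.symm, Ne.symm hne⟩

theorem eq_of_degree_crossing_eq_one (h : EvenCycleProfile G S) (hr : r ∉ S) (hr' : r' ∉ S)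
    (hdeg : (crossing G S).degree r = 1) (hdeg' : (crossing G S).degree r' = 1) : r = r' := by
  obtain ⟨s, hs⟩ := exists_isNIndepSet_insert_erase h.isMaximumIndepSet.1 hr hdeg
  obtain ⟨s', hs'⟩ := exists_isNIndepSet_insert_erase h.isMaximumIndepSet.1 hr' hdeg'
  have heq := h.eq_of_ne hs' (fun h => hr' (h ▸ mem_insert_self ..)) hs
    (fun h => hr (h ▸ mem_insert_self ..))
  have hmem : r ∈ insert r' (S.erase s') := heq ▸ mem_insert_self ..
  simpa [hr] using hmem

theorem two_mul_card_le (h : EvenCycleProfile G S) : 2 * #S ≤ #(crossing G S).edgeFinset + 1 := by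
  have hone : #{r ∈ Sᶜ | (crossing G S).degree r = 1} ≤ 1 := by
    refine card_le_one.2 fun r hr r' hr' => ?_
    rw [mem_filter, mem_compl] at hr hr'
    exact h.eq_of_degree_crossing_eq_one hr.1 hr'.1 hr.2 hr'.2
  have hsum : ∑ r ∈ Sᶜ, 2 ≤
      ∑ r ∈ Sᶜ, ((crossing G S).degree r + if (crossing G S).degree r = 1 then 1 else 0) := by
    refine sum_le_sum fun r hr => ?_
    have := one_le_degree_crossing h.isMaximumIndepSet (mem_compl.1 hr)
    split_ifs <;> omega
  rw [sum_add_distrib, isBipartiteWith_sum_degrees_eq_card_edges' isBipartiteWith_crossing,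
    ← card_filter, sum_const, h.card_compl, smul_eq_mul] at hsum
  omega

theorem exists_iso_pathGraph_of_eq_sup_edge (h : EvenCycleProfile G S)
    (hH : H.IsBipartiteWith S ↑Sᶜ) (hG : G = H ⊔ edge x y) (hne : x ≠ y) (hxy : ¬ H.Adj x y)
    (hdeg : ∀ v, H.degree v ≤ 2) (hdegx : H.degree x ≤ 1) (hx : x ∉ S)
    (hT : G.IsNIndepSet #S T) (hxT : x ∈ T) :
    ∃ f : H ≃g pathGraph (Fintype.card V), (f x).val = 0 := by
  have hcard := card_edgeFinset_of_eq_sup_edge hG hne hxy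
  rw [h.card_edgeFinset] at hcard
  have hconn : H.Connected := by
    refine connected_of_unique_isIndepSet hH hdeg hcard.le hx fun U hU hcardU hxU => ?_
    have hUG : G.IsIndepSet U := isIndepSet_of_eq_sup_edge hG hU hxU
    by_contra hUS
    have hUT := h.eq_of_ne hT (fun hTS => hx (hTS ▸ hxT))
      ⟨hUG, (h.isMaximumIndepSet.2 U hUG).antisymm hcardU⟩ hUS
    exact hxU (hUT ▸ hxT)
  obtain ⟨f, hf⟩ := exists_iso_pathGraph hconn hdeg hdegx
  exact ⟨f, (hf x).trans dist_self⟩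

theorem degree_eq_two (h : EvenCycleProfile G S) (hG : G.IsBipartiteWith S ↑Sᶜ) (v : V) :
    G.degree v = 2 := by
  have hfree : G.CliqueFree 3 := (hG.isBipartite : G.Colorable 2).cliqueFree (by omega)
  have hsum := h.sum_choose_two_le
  rw [hfree.cliqueFinset, card_empty, Nat.le_zero, sum_eq_zero_iff] at hsum
  have hle (v : V) : G.degree v ≤ 2 := by
    have := Nat.choose_eq_zero_iff.1 (hsum v (mem_univ v))
    omega
  have heq : ∑ v, G.degree v = ∑ v : V, 2 := by
    rw [sum_degrees_eq_twice_card_edges, h.card_edgeFinset, sum_const, card_univ, smul_eq_mul,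
      ← card_add_card_compl S, h.card_compl]
    ring
  exact (sum_eq_sum_iff_of_le fun v _ => hle v).1 heq v (mem_univ v)

theorem nonempty_iso_cycleGraph (h : EvenCycleProfile G S) (hG : G.IsBipartiteWith S ↑Sᶜ)
    (hS : S.Nonempty) : Nonempty (G ≃g cycleGraph (Fintype.card V)) := by
  classical
  obtain ⟨x, hx⟩ : Sᶜ.Nonempty := by rwa [← card_pos, h.card_compl, card_pos]
  obtain ⟨y, hxy⟩ := (G.degree_pos_iff_exists_adj x).1 (by rw [h.degree_eq_two hG]; omega)
  have hsup : G = G \ edge x y ⊔ edge x y :=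
    (sdiff_sup_cancel ((edge_le_iff G).2 (.inr hxy))).symm
  have hnot : ¬ (G \ edge x y).Adj x y := by simp [sdiff_adj, edge_adj, hxy.ne]
  have hdegx := degree_left_of_eq_sup_edge hsup hxy.ne hnot
  have hdegy := degree_right_of_eq_sup_edge hsup hxy.ne hnot
  rw [h.degree_eq_two hG] at hdegx hdegy
  have hle : G \ edge x y ≤ G := sdiff_le
  obtain ⟨f, hfx⟩ := h.exists_iso_pathGraph_of_eq_sup_edge (T := Sᶜ)
    ⟨hG.disjoint, fun u v huv => hG.mem_of_adj (hle huv)⟩ hsup hxy.ne hnot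
    (fun v => h.degree_eq_two hG v ▸ degree_le_of_le hle) (by omega) (mem_compl.1 hx)
    ⟨isIndepSet_of_isBipartiteWith hG.symm, h.card_compl⟩ hx
  have hfy : (f y).val = Fintype.card V - 1 := by
    rw [← f.degree_eq] at hdegy
    refine (val_eq_zero_or_of_degree_pathGraph_le_one (by omega)).resolve_left fun h0 => hxy.ne ?_
    exact f.injective (Fin.ext (hfx.trans h0.symm))
  have hcard : 2 < Fintype.card V := by
    rw [← h.degree_eq_two hG x]
    exact G.degree_lt_card_verts x
  rw [← pathGraph_sup_edge_eq_cycleGraph hcard hfx hfy]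
  exact nonempty_iso_sup_edge hsup f

theorem choose_two_add_choose_two_add_sum_le (h : EvenCycleProfile G S)
    (hH : H.IsBipartiteWith S ↑Sᶜ) (hG : G = H ⊔ edge x y) (hne : x ≠ y) (hxy : ¬ H.Adj x y) :
    (H.degree x).choose 2 + (H.degree y).choose 2 + ∑ v ∈ {x, y}ᶜ, (H.degree v - 1).choose 2 ≤
      #(H.neighborFinset x ∩ H.neighborFinset y) := by
  have hfree : H.CliqueFree 3 := (hH.isBipartite : H.Colorable 2).cliqueFree (by omega)
  refine le_trans (le_of_eq ?_) (h.sum_choose_two_le.trans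
    (card_cliqueFinset_three_le_of_eq_sup_edge hG hne hfree))
  rw [← sum_add_sum_compl {x, y}, sum_pair hne, degree_left_of_eq_sup_edge hG hne hxy,
    degree_right_of_eq_sup_edge hG hne hxy]
  refine congrArg _ (sum_congr rfl fun v hv => ?_)
  rw [mem_compl, mem_insert, mem_singleton, not_or] at hv
  rw [degree_of_eq_sup_edge hG hv.1 hv.2]

theorem degree_le_two_and_card_inter_eq_min (h : EvenCycleProfile G S)
    (hH : H.IsBipartiteWith S ↑Sᶜ) (hG : G = H ⊔ edge x y) (hne : x ≠ y) (hxy : ¬ H.Adj x y)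
    (hx : 1 ≤ H.degree x) (hy : 1 ≤ H.degree y) (hor : H.degree x ≠ 1 ∨ H.degree y ≠ 1) :
    (∀ v, H.degree v ≤ 2) ∧
      #(H.neighborFinset x ∩ H.neighborFinset y) = min (H.degree x) (H.degree y) := by
  have hsum := h.choose_two_add_choose_two_add_sum_le hH hG hne hxy
  obtain ⟨hx2, hy2, hmin, heq⟩ := choose_two_add_choose_two_eq hx hy hor
    (card_le_card inter_subset_left) (card_le_card inter_subset_right)
    ((Nat.le_add_right ..).trans hsum)
  have hzero : ∑ v ∈ {x, y}ᶜ, (H.degree v - 1).choose 2 = 0 := by omega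
  refine ⟨fun v => ?_, hmin⟩
  by_cases hv : v ∈ ({x, y} : Finset V)
  · rcases mem_insert.1 hv with rfl | hv
    · exact hx2
    · exact mem_singleton.1 hv ▸ hy2
  · have := Nat.choose_eq_zero_iff.1 (sum_eq_zero_iff.1 hzero v (mem_compl.2 hv))
    omega

theorem nonempty_iso_dGraph (h : EvenCycleProfile G S) (hG : G = crossing G S ⊔ edge x y)
    (hne : x ≠ y) (hxy : ¬ (crossing G S).Adj x y) (hx : x ∉ S) (hy : y ∉ S)
    (hdegx : (crossing G S).degree x = 1) : Nonempty (G ≃g dGraph (Fintype.card V)) := by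
  have hbip : (crossing G S).IsBipartiteWith S ↑Sᶜ := isBipartiteWith_crossing
  have hdegy : (crossing G S).degree y ≠ 1 := fun hdegy =>
    hne (h.eq_of_degree_crossing_eq_one hx hy hdegx hdegy)
  have hy1 := one_le_degree_crossing h.isMaximumIndepSet hy
  obtain ⟨hdeg, hcard⟩ := h.degree_le_two_and_card_inter_eq_min hbip hG hne hxy hdegx.ge hy1
    (.inr hdegy)
  obtain ⟨s, hs⟩ := card_eq_one.1 (hcard.trans (by omega))
  obtain ⟨t, ht⟩ := exists_isNIndepSet_insert_erase h.isMaximumIndepSet.1 hx hdegx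
  obtain ⟨f, hfx⟩ := h.exists_iso_pathGraph_of_eq_sup_edge hbip hG hne hxy hdeg hdegx.le hx ht
    (mem_insert_self ..)
  have hfy : (f y).val = 2 := by
    obtain ⟨hxs, hys⟩ : (crossing G S).Adj x s ∧ (crossing G S).Adj y s := by
      simpa only [mem_inter, mem_neighborFinset] using (Finset.ext_iff.1 hs s).2 (by simp)
    rw [← f.map_adj_iff, pathGraph_adj] at hxs hys
    have hval := Fin.val_injective.ne (f.injective.ne hne)
    omega
  rw [← pathGraph_sup_edge_eq_dGraph hfx hfy]
  exact nonempty_iso_sup_edge hG f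

theorem exists_degree_crossing_eq_one (h : EvenCycleProfile G S)
    (hG : G = crossing G S ⊔ edge x y) (hne : x ≠ y) (hxy : ¬ (crossing G S).Adj x y) :
    ∃ r ∉ S, (crossing G S).degree r = 1 := by
  by_contra! hall
  have hsum : #Sᶜ * 2 ≤ ∑ r ∈ Sᶜ, (crossing G S).degree r := by
    refine card_nsmul_le_sum Sᶜ (fun r => (crossing G S).degree r) 2 fun r hr => ?_
    rw [mem_compl] at hr
    have := one_le_degree_crossing h.isMaximumIndepSet hr
    have := hall r hr
    omega
  rw [isBipartiteWith_sum_degrees_eq_card_edges' isBipartiteWith_crossing, h.card_compl] at hsum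
  have hcard := card_edgeFinset_of_eq_sup_edge hG hne hxy
  rw [h.card_edgeFinset] at hcard
  omega

theorem eq_of_notMem_of_forall_adj (h : EvenCycleProfile G S) (hG : G = crossing G S ⊔ edge x y)
    (hne : x ≠ y) (hxy : ¬ (crossing G S).Adj x y) (hdeg : ∀ v, (crossing G S).degree v ≤ 2)
    (hx : x ∉ S) {K : Finset V} (hK : ∀ ⦃u v⦄, (crossing G S).Adj u v → u ∈ K → v ∈ K)
    (hxK : x ∈ K) (hr : r ∉ S) (hdegr : (crossing G S).degree r = 1) (hrK : r ∉ K) (hr' : r' ∉ S)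
    (hrK' : r' ∉ K) : r' = r := by
  have hbip : (crossing G S).IsBipartiteWith S ↑Sᶜ := isBipartiteWith_crossing
  have hcard := card_edgeFinset_of_eq_sup_edge hG hne hxy
  rw [h.card_edgeFinset] at hcard
  have hKc : ∀ ⦃u v⦄, (crossing G S).Adj u v → u ∈ Kᶜ → v ∈ Kᶜ := fun u v huv hu =>
    mem_compl.2 fun hv => mem_compl.1 hu (hK huv.symm hv)
  have hxU : x ∉ symmDiff S Kᶜ := by simp [mem_symmDiff, hx, hxK]
  have hU : G.IsIndepSet ↑(symmDiff S Kᶜ) :=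
    isIndepSet_of_eq_sup_edge hG (isIndepSet_symmDiff hbip hKc) hxU
  have hcardU := (h.isMaximumIndepSet.2 _ hU).antisymm
    (card_le_card_symmDiff hbip hdeg hcard.le hKc)
  obtain ⟨s, hs⟩ := exists_isNIndepSet_insert_erase h.isMaximumIndepSet.1 hr hdegr
  have hrU : r ∈ symmDiff S Kᶜ := by simp [mem_symmDiff, hr, hrK]
  have heq := h.eq_of_ne hs (fun h => hr (h ▸ mem_insert_self ..)) ⟨hU, hcardU⟩
    (fun h => hr (h ▸ hrU))
  have hmem : r' ∈ insert r (S.erase s) := heq ▸ by simp [mem_symmDiff, hr', hrK']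
  simpa [hr'] using hmem

theorem card_eq_three_of_degree_crossing_ne_one (h : EvenCycleProfile G S)
    (hG : G = crossing G S ⊔ edge x y) (hne : x ≠ y) (hxy : ¬ (crossing G S).Adj x y)
    (hx : x ∉ S) (hy : y ∉ S)
    (hdegx : (crossing G S).degree x ≠ 1) (hdegy : (crossing G S).degree y ≠ 1) : #S = 3 := by
  have hbip : (crossing G S).IsBipartiteWith S ↑Sᶜ := isBipartiteWith_crossing
  have hx1 := one_le_degree_crossing h.isMaximumIndepSet hx
  have hy1 := one_le_degree_crossing h.isMaximumIndepSet hy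
  obtain ⟨hdeg, hcard⟩ := h.degree_le_two_and_card_inter_eq_min hbip hG hne hxy hx1 hy1
    (.inl hdegx)
  have hdx := hdeg x
  have hdy := hdeg y
  have hN : (crossing G S).neighborFinset x = (crossing G S).neighborFinset y :=
    (eq_of_subset_of_card_le inter_subset_left
      (by rw [hcard, card_neighborFinset_eq_degree]; omega)).symm.trans
    (eq_of_subset_of_card_le inter_subset_right
      (by rw [hcard, card_neighborFinset_eq_degree]; omega))
  obtain ⟨r, hr, hdegr⟩ := h.exists_degree_crossing_eq_one hG hne hxy
  have hrx : r ≠ x := fun h => hdegx (h ▸ hdegr)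
  have hry : r ≠ y := fun h => hdegy (h ▸ hdegr)
  have hNS : (crossing G S).neighborFinset x ⊆ S :=
    isBipartiteWith_neighborFinset_subset hbip.symm (mem_compl.2 hx)
  have hout {v : V} (hv : v ∉ S) (hvx : v ≠ x) (hvy : v ≠ y) :
      v ∉ insert x (insert y ((crossing G S).neighborFinset x)) := by
    simp only [mem_insert, hvx, hvy, false_or]
    exact fun h => hv (hNS h)
  have hcompl : Sᶜ = {x, y, r} := by
    ext v
    simp only [mem_compl, mem_insert, mem_singleton]
    constructor
    · intro hv
      by_contra! hvne
      exact hvne.2.2 (h.eq_of_notMem_of_forall_adj hG hne hxy hdeg hx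
        (fun _ _ => mem_insert_insert_neighborFinset_of_adj hdeg hne hN) (mem_insert_self ..)
        hr hdegr (hout hr hrx hry) hv (hout hv hvne.1 hvne.2.1))
    · rintro (rfl | rfl | rfl) <;> assumption
  rw [← h.card_compl, hcompl, card_eq_three]
  exact ⟨x, y, r, hne, hrx.symm, hry.symm, rfl⟩

end EvenCycleProfile

theorem indepEquiv_evenCycle {V : Type*} [Fintype V] (G : SimpleGraph V) (n : ℕ)
    (hn : 2 ≤ n) (hn3 : n ≠ 3)
    (h : ∀ k, indepCount G k = indepCount (SimpleGraph.cycleGraph (2 * n)) k) :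
    Nonempty (G ≃g SimpleGraph.cycleGraph (2 * n)) ∨ Nonempty (G ≃g dGraph (2 * n)) := by
  classical
  obtain ⟨S, hS⟩ := G.maximumIndepSet_exists
  have hGC : IndepEquiv G (cycleGraph (2 * n)) := h
  have hprofile := hGC.evenCycleProfile hn hS
  have hcardS : #S = n := by
    rw [maximumIndepSet_card_eq_indepNum S hS, hGC.indepNum_eq, indepNum_cycleGraph_two_mul hn]
  rw [← Fintype.card_fin (2 * n), ← hGC.card_eq]
  rcases crossing_eq_or_exists_eq_sup_edge
    (hprofile.card_edgeFinset.trans_le hprofile.two_mul_card_le) with hG | ⟨x, y, hadj, hxy, hG⟩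
  · left
    exact hprofile.nonempty_iso_cycleGraph (hG ▸ isBipartiteWith_crossing) (card_pos.1 (by omega))
  · right
    have hx := notMem_of_not_crossing_adj hS.1 hadj hxy
    have hy := notMem_of_not_crossing_adj hS.1 hadj.symm (mt Adj.symm hxy)
    by_cases hdegx : (crossing G S).degree x = 1
    · exact hprofile.nonempty_iso_dGraph hG hadj.ne hxy hx hy hdegx
    by_cases hdegy : (crossing G S).degree y = 1
    · exact hprofile.nonempty_iso_dGraph (hG.trans (by rw [edge_comm])) hadj.ne.symm
        (mt Adj.symm hxy) hy hx hdegy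
    · refine absurd (hcardS.symm.trans ?_) hn3
      exact hprofile.card_eq_three_of_degree_crossing_ne_one hG hadj.ne hxy hx hy hdegx hdegy
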